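/- Let A₁, ..., A_{d+1} ⊂ S^d be closed sets with A_i ∩ (-A_i) = ∅ for all i and ⋃_i A_i ∪ ⋃_i (-A_i) = S^d. Then for every partition of [d+1] into two disjoint (possibly empty) sets S and T, the intersection ⋂_{i∈S} A_i ∩ ⋂_{i∈T} (-A_i) is nonempty. -/

import Mathlib

open Pointwise

namespace Fan

abbrev Ch (X : Type*) := List X →₀ ZMod 2

noncomputable section

variable {X Y : Type*}

def sg (l : List X) : Ch X := Finsupp.single l 1

def cone (a : X) : Ch X →ₗ[ZMod 2] Ch X := Finsupp.linearCombination (ZMod 2) (fun l => sg (a :: l))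

def bdL : List X → Ch X
  | [] => 0
  | a :: l => sg l + cone a (bdL l)

def bd : Ch X →ₗ[ZMod 2] Ch X := Finsupp.linearCombination (ZMod 2) bdL

def mp (f : X → Y) : Ch X →ₗ[ZMod 2] Ch Y :=
  Finsupp.linearCombination (ZMod 2) (fun l => sg (l.map f))

@[simp] lemma cone_sg (a : X) (l : List X) : cone a (sg l) = sg (a :: l) := by
  simp [cone, sg, Finsupp.linearCombination_single]

@[simp] lemma bd_sg (l : List X) : bd (sg l) = bdL l := by
  simp [bd, sg, Finsupp.linearCombination_single]

@[simp] lemma mp_sg (f : X → Y) (l : List X) : mp f (sg l) = sg (l.map f) := by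
  simp [mp, sg, Finsupp.linearCombination_single]

lemma lext {M : Type*} [AddCommGroup M] [Module (ZMod 2) M] {f g : Ch X →ₗ[ZMod 2] M}
    (h : ∀ l, f (sg l) = g (sg l)) (c : Ch X) : f c = g c := by
  have : f = g := by
    apply Finsupp.lhom_ext'
    intro l
    apply LinearMap.ext_ring
    exact h l
  rw [this]

/-- chains supported on lists satisfying a predicate -/
def Sup (P : List X → Prop) : Submodule (ZMod 2) (Ch X) := Finsupp.supported (ZMod 2) (ZMod 2) {l | P l}

lemma sup_span (P : List X → Prop) : Sup P = Submodule.span (ZMod 2) (sg '' {l | P l}) :=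
  Finsupp.supported_eq_span_single _ _

lemma sg_mem {P : List X → Prop} {l : List X} (h : P l) : sg l ∈ Sup P := by
  rw [sup_span]; exact Submodule.subset_span ⟨l, h, rfl⟩

lemma sup_map {P : List X → Prop} {M : Type*} [AddCommGroup M] [Module (ZMod 2) M]
    (f : Ch X →ₗ[ZMod 2] M) (N : Submodule (ZMod 2) M)
    (h : ∀ l, P l → f (sg l) ∈ N) {c : Ch X} (hc : c ∈ Sup P) : f c ∈ N := by
  rw [sup_span] at hc
  have : Submodule.span (ZMod 2) (sg '' {l | P l}) ≤ N.comap f := by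
    rw [Submodule.span_le]
    rintro _ ⟨l, hl, rfl⟩
    exact h l hl
  exact this hc

lemma sup_ext {P : List X → Prop} {M : Type*} [AddCommGroup M] [Module (ZMod 2) M]
    (f g : Ch X →ₗ[ZMod 2] M)
    (h : ∀ l, P l → f (sg l) = g (sg l)) {c : Ch X} (hc : c ∈ Sup P) : f c = g c := by
  have := sup_map (f - g) ⊥ (fun l hl => by simp [h l hl]) hc
  simpa [sub_eq_zero] using this

lemma sup_mono {P Q : List X → Prop} (h : ∀ l, P l → Q l) {c : Ch X} (hc : c ∈ Sup P) : c ∈ Sup Q :=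
  Finsupp.supported_mono (fun l hl => h l hl) hc

lemma two (c : Ch X) : c + c = 0 := ZModModule.add_self c

lemma bd_cone (a : X) (c : Ch X) : bd (cone a c) = c + cone a (bd c) :=
  lext (f := bd ∘ₗ cone a) (g := LinearMap.id + cone a ∘ₗ bd) (by intro l; simp [bdL]) c

lemma mp_cone (f : X → Y) (a : X) (c : Ch X) : mp f (cone a c) = cone (f a) (mp f c) :=
  lext (f := mp f ∘ₗ cone a) (g := cone (f a) ∘ₗ mp f) (by intro l; simp) c

lemma mp_bdL (f : X → Y) (l : List X) : mp f (bdL l) = bdL (l.map f) := by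
  induction l with
  | nil => simp [bdL]
  | cons a l ih => simp [bdL, mp_cone, ih]

lemma mp_bd (f : X → Y) (c : Ch X) : mp f (bd c) = bd (mp f c) :=
  lext (f := mp f ∘ₗ bd) (g := bd ∘ₗ mp f) (by intro l; simp [mp_bdL]) c

lemma mp_mp {Z : Type*} (f : X → Y) (g : Y → Z) (c : Ch X) : mp g (mp f c) = mp (g ∘ f) c :=
  lext (f := mp g ∘ₗ mp f) (g := mp (g ∘ f)) (by intro l; simp) c

lemma mp_id (c : Ch X) : mp (fun x => x) c = c :=
  lext (f := mp (fun x => x)) (g := LinearMap.id) (by intro l; simp) c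

/-! prism operator -/

def prL (f g : X → Y) : List X → Ch Y
  | [] => 0
  | v :: l => sg (f v :: g v :: l.map g) + cone (f v) (prL f g l)

def pr (f g : X → Y) : Ch X →ₗ[ZMod 2] Ch Y := Finsupp.linearCombination (ZMod 2) (prL f g)

@[simp] lemma pr_sg (f g : X → Y) (l : List X) : pr f g (sg l) = prL f g l := by
  simp [pr, sg, Finsupp.linearCombination_single]

lemma pr_cone (f g : X → Y) (v : X) (c : Ch X) :
    pr f g (cone v c) = cone (f v) (cone (g v) (mp g c)) + cone (f v) (pr f g c) :=
  lext (f := pr f g ∘ₗ cone v) (g := cone (f v) ∘ₗ cone (g v) ∘ₗ mp g + cone (f v) ∘ₗ pr f g)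
    (by intro l; simp [prL]) c

lemma bd_prL (f g : X → Y) (l : List X) :
    bd (prL f g l) = sg (l.map g) + sg (l.map f) + pr f g (bdL l) := by
  induction l with
  | nil => simp [prL, bdL, two]
  | cons v l ih =>
    simp only [prL, bdL, map_add, bd_sg, bd_cone, ih, pr_cone, mp_bdL, cone_sg, pr_sg, List.map_cons]
    have := two (sg (f v :: l.map g))
    calc _ = sg (g v :: List.map g l) + sg (f v :: List.map f l) +
      (prL f g l + ((cone (f v)) ((cone (g v)) (bdL (List.map g l))) + (cone (f v)) ((pr f g) (bdL l))))
       + (sg (f v :: l.map g) + sg (f v :: l.map g)) := by abel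
      _ = _ := by rw [this, add_zero]

lemma bd_pr (f g : X → Y) (c : Ch X) :
    bd (pr f g c) = mp g c + mp f c + pr f g (bd c) :=
  lext (f := bd ∘ₗ pr f g) (g := mp g + mp f + pr f g ∘ₗ bd) (by intro l; simp [bd_prL]) c

lemma prL_mem (f g : X → Y) (l : List X) :
    prL f g l ∈ Sup (fun m : List Y => m.length = l.length + 1 ∧
      ∀ x ∈ m, ∃ v ∈ l, x = f v ∨ x = g v) := by
  induction l with
  | nil => simp [prL]
  | cons v l ih =>
    refine Submodule.add_mem _ (sg_mem ⟨by simp, ?_⟩) (sup_map _ _ ?_ ih)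
    · intro x hx
      simp only [List.mem_cons, List.mem_map] at hx
      rcases hx with h | h | ⟨a, ha, h⟩
      · exact ⟨v, by simp, Or.inl h⟩
      · exact ⟨v, by simp, Or.inr h⟩
      · exact ⟨a, by simp [ha], Or.inr h.symm⟩
    · rintro m ⟨hm, hm'⟩
      rw [cone_sg]
      refine sg_mem ⟨by simp [hm], ?_⟩
      intro x hx
      simp only [List.mem_cons] at hx
      rcases hx with h | h
      · exact ⟨v, by simp, Or.inl h⟩
      · obtain ⟨w, hw, h⟩ := hm' x h
        exact ⟨w, by simp [hw], h⟩

/-! labels -/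

def phi {n : ℕ} : Bool → List (Fin n × Bool) → ZMod 2
  | _, [] => 1
  | s, a :: l => if a.2 = s then phi (!s) l else 0

def ph {n : ℕ} (s : Bool) : Ch (Fin n × Bool) →ₗ[ZMod 2] ZMod 2 :=
  Finsupp.linearCombination (ZMod 2) (phi s)

variable {n : ℕ}

@[simp] lemma ph_sg (s : Bool) (l : List (Fin n × Bool)) : ph s (sg l) = phi s l := by
  simp [ph, sg, Finsupp.linearCombination_single]

lemma ph_cone (s : Bool) (a : Fin n × Bool) (c : Ch (Fin n × Bool)) :
    ph s (cone a c) = if a.2 = s then ph (!s) c else 0 := by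
  split_ifs with h
  · exact lext (f := ph s ∘ₗ cone a) (g := ph (!s)) (by intro l; simp [phi, h]) c
  · exact lext (f := ph s ∘ₗ cone a) (g := 0) (by intro l; simp [phi, h]) c

lemma ph_bdL (s : Bool) (l : List (Fin n × Bool)) :
    ph s (bdL l) = phi s l + phi (!s) l := by
  induction l generalizing s with
  | nil => simp only [bdL, map_zero, phi]; decide
  | cons a l ih =>
    have h2 : ∀ x : ZMod 2, x + x = 0 := by decide
    obtain ⟨i, b⟩ := a
    simp only [bdL, map_add, ph_sg, ph_cone, ih, phi]
    cases b <;> cases s <;> simp <;> (rw [add_left_comm, h2, add_zero])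

lemma ph_bd (s : Bool) (c : Ch (Fin n × Bool)) : ph s (bd c) = ph s c + ph (!s) c :=
  lext (f := ph s ∘ₗ bd) (g := ph s + ph (!s)) (by intro l; simp [ph_bdL]) c

def fl (a : Fin n × Bool) : Fin n × Bool := (a.1, !a.2)

lemma phi_fl (s : Bool) (l : List (Fin n × Bool)) : phi s (l.map fl) = phi (!s) l := by
  induction l generalizing s with
  | nil => simp [phi]
  | cons a l ih =>
    obtain ⟨i, b⟩ := a
    simp only [List.map_cons, phi, ih, fl]
    cases b <;> cases s <;> simp

lemma ph_fl (s : Bool) (c : Ch (Fin n × Bool)) : ph s (mp fl c) = ph (!s) c :=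
  lext (f := ph s ∘ₗ mp fl) (g := ph (!s)) (by intro l; simp [phi_fl]) c

def insL (a : Fin n × Bool) : List (Fin n × Bool) → Ch (Fin n × Bool)
  | [] => sg [a]
  | b :: l => if a.1 < b.1 then sg (a :: b :: l) else if a.1 = b.1 then 0 else cone b (insL a l)

def ins (a : Fin n × Bool) : Ch (Fin n × Bool) →ₗ[ZMod 2] Ch (Fin n × Bool) :=
  Finsupp.linearCombination (ZMod 2) (insL a)

@[simp] lemma ins_sg (a : Fin n × Bool) (l) : ins a (sg l) = insL a l := by
  simp [ins, sg, Finsupp.linearCombination_single]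

lemma insL_fl (a : Fin n × Bool) (l) : mp fl (insL a l) = insL (fl a) (l.map fl) := by
  induction l with
  | nil => simp [insL]
  | cons b l ih =>
    simp only [insL, List.map_cons]
    have h1 : (fl a).1 = a.1 := rfl
    have h2 : (fl b).1 = b.1 := rfl
    rw [h1, h2]
    split_ifs <;> simp [mp_cone, ih]

lemma ins_fl (a : Fin n × Bool) (c) : mp fl (ins a c) = ins (fl a) (mp fl c) :=
  lext (f := mp fl ∘ₗ ins a) (g := ins (fl a) ∘ₗ mp fl) (by intro l; simp [insL_fl]) c

def Sorted (l : List (Fin n × Bool)) : Prop := l.Pairwise (fun x y => x.1 < y.1)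

lemma insL_lt (a : Fin n × Bool) (l : List (Fin n × Bool)) (h : ∀ b ∈ l, a.1 < b.1) :
    insL a l = sg (a :: l) := by
  cases l with
  | nil => rfl
  | cons b l => simp [insL, h b (by simp)]

lemma bdL_mem {X : Type*} (l : List X) : bdL l ∈ Sup (fun m : List X => ∀ x ∈ m, x ∈ l) := by
  induction l with
  | nil => simp [bdL]
  | cons a l ih =>
    refine Submodule.add_mem _ (sg_mem ?_) (sup_map _ _ ?_ ih)
    · intro x hx; simp [hx]
    · intro m hm
      rw [cone_sg]
      refine sg_mem ?_
      intro x hx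
      simp only [List.mem_cons] at hx ⊢
      rcases hx with h | h
      · exact Or.inl h
      · exact Or.inr (hm x h)

lemma ins_cone_gt (a b : Fin n × Bool) (h : b.1 < a.1) (c) : ins a (cone b c) = cone b (ins a c) :=
  lext (f := ins a ∘ₗ cone b) (g := cone b ∘ₗ ins a)
    (by intro l; simp [insL, h.not_gt, h.ne']) c

lemma ins_cone_self (a : Fin n × Bool) (c) : ins a (cone a c) = 0 :=
  lext (f := ins a ∘ₗ cone a) (g := 0)
    (by intro l; simp [insL]) c

lemma bd_insL (a : Fin n × Bool) (l : List (Fin n × Bool)) (hs : Sorted l)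
    (hc : ∀ b ∈ l, a.1 = b.1 → a = b) :
    bd (insL a l) = sg l + ins a (bdL l) := by
  induction l with
  | nil => simp [insL, bdL]
  | cons b l ih =>
    have hs' := List.pairwise_cons.1 hs
    rcases lt_trichotomy a.1 b.1 with h | h | h
    · rw [insL_lt]
      · simp only [bd_sg]
        rw [bdL.eq_2]
        congr 1
        symm
        refine sup_ext (ins a) (cone a) ?_ (bdL_mem (b :: l))
        intro m hm
        rw [ins_sg, insL_lt, cone_sg]
        intro x hx
        have := hm x hx
        simp only [List.mem_cons] at this
        rcases this with rfl | hh
        · exact h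
        · exact h.trans (hs'.1 x hh)
      · intro x hx
        simp only [List.mem_cons] at hx
        rcases hx with rfl | hh
        · exact h
        · exact h.trans (hs'.1 x hh)
    · have := hc b (by simp) h
      subst this
      simp only [insL, lt_irrefl, if_false, if_true, map_zero, bdL, map_add, ins_cone_self, ins_sg]
      rw [insL_lt a l hs'.1, add_zero, two]
    · simp only [insL, h.not_gt, h.ne', if_false, bd_cone, bdL, map_add, ins_cone_gt a b h, ins_sg]
      rw [ih hs'.2 (fun x hx => hc x (by simp [hx]))]
      simp only [map_add, cone_sg]
      abel

lemma insL_mem (a : Fin n × Bool) (l : List (Fin n × Bool)) (hs : Sorted l) :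
    insL a l ∈ Sup (fun m => Sorted m ∧ (∀ x ∈ m, x = a ∨ x ∈ l) ∧ m.length = l.length + 1) := by
  induction l with
  | nil => exact sg_mem ⟨by simp [Sorted], by simp, by simp⟩
  | cons b l ih =>
    have hs' := List.pairwise_cons.1 hs
    rcases lt_trichotomy a.1 b.1 with h | h | h
    · simp only [insL, h, if_true]
      refine sg_mem ⟨List.pairwise_cons.2 ⟨?_, hs⟩, by simp, by simp⟩
      intro x hx
      simp only [List.mem_cons] at hx
      rcases hx with rfl | hh
      · exact h
      · exact h.trans (hs'.1 x hh)
    · simp [insL, h]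
    · simp only [insL, h.not_gt, h.ne', if_false]
      refine sup_map _ _ ?_ (ih hs'.2)
      rintro m ⟨h1, h2, h3⟩
      rw [cone_sg]
      refine sg_mem ⟨List.pairwise_cons.2 ⟨?_, h1⟩, ?_, by simp [h3]⟩
      · intro x hx
        rcases h2 x hx with rfl | hh
        · exact h
        · exact hs'.1 x hh
      · intro x hx
        simp only [List.mem_cons] at hx ⊢
        rcases hx with rfl | hh
        · simp
        · rcases h2 x hh with rfl | hh <;> simp [*]

def srt : List (Fin n × Bool) → Ch (Fin n × Bool)
  | [] => sg []
  | a :: l => ins a (srt l)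

def Srt : Ch (Fin n × Bool) →ₗ[ZMod 2] Ch (Fin n × Bool) := Finsupp.linearCombination (ZMod 2) srt

@[simp] lemma Srt_sg (l : List (Fin n × Bool)) : Srt (sg l) = srt l := by
  simp [Srt, sg, Finsupp.linearCombination_single]

lemma Srt_cone (a : Fin n × Bool) (c) : Srt (cone a c) = ins a (Srt c) :=
  lext (f := Srt ∘ₗ cone a) (g := ins a ∘ₗ Srt) (by intro l; simp [srt]) c

lemma srt_fl (l : List (Fin n × Bool)) : mp fl (srt l) = srt (l.map fl) := by
  induction l with
  | nil => simp [srt]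
  | cons a l ih => simp [srt, ins_fl, ih]

lemma srt_mem (l : List (Fin n × Bool)) :
    srt l ∈ Sup (fun m => Sorted m ∧ (∀ x ∈ m, x ∈ l) ∧ m.length = l.length) := by
  induction l with
  | nil => exact sg_mem ⟨by simp [Sorted], by simp, by simp⟩
  | cons a l ih =>
    refine sup_map _ _ ?_ ih
    rintro m ⟨h1, h2, h3⟩
    rw [ins_sg]
    refine sup_mono ?_ (insL_mem a m h1)
    rintro p ⟨p1, p2, p3⟩
    refine ⟨p1, ?_, by simp [p3, h3]⟩
    intro x hx
    rcases p2 x hx with rfl | hh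
    · simp
    · simp [h2 x hh]

lemma bd_srt (l : List (Fin n × Bool)) (hc : ∀ a ∈ l, ∀ b ∈ l, a.1 = b.1 → a = b) :
    bd (srt l) = Srt (bdL l) := by
  induction l with
  | nil => simp [srt, bdL]
  | cons a l ih =>
    have key : bd (ins a (srt l)) = srt l + ins a (bd (srt l)) := by
      refine sup_ext (bd ∘ₗ ins a) (LinearMap.id + ins a ∘ₗ bd) ?_ (srt_mem l)
      rintro m ⟨h1, h2, h3⟩
      simp only [LinearMap.comp_apply, LinearMap.add_apply, LinearMap.id_apply, ins_sg, bd_sg]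
      exact bd_insL a m h1 (fun b hb h => hc a (by simp) b (by simp [h2 b hb]) h)
    rw [srt, key, ih (fun a ha b hb => hc a (by simp [ha]) b (by simp [hb]))]
    simp [bdL, Srt_cone]

/-- number mod 2 of alternating simplices starting with sign `s` -/
def alt (lam : X → Fin n × Bool) (s : Bool) : Ch X →ₗ[ZMod 2] ZMod 2 := ph s ∘ₗ Srt ∘ₗ mp lam

lemma alt_bd (lam : X → Fin n × Bool) (s : Bool) (l : List X)
    (hc : ∀ a ∈ l, ∀ b ∈ l, (lam a).1 = (lam b).1 → lam a = lam b) :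
    alt lam s (bd (sg l)) = alt lam s (sg l) + alt lam (!s) (sg l) := by
  simp only [alt, LinearMap.comp_apply, bd_sg, mp_bdL, mp_sg]
  rw [← bd_srt, ph_bd, Srt_sg]
  intro a ha b hb
  simp only [List.mem_map] at ha hb
  obtain ⟨a, ha, rfl⟩ := ha
  obtain ⟨b, hb, rfl⟩ := hb
  exact hc a ha b hb

lemma alt_neg [Neg X] (lam : X → Fin n × Bool) (s : Bool) (l : List X)
    (hc : ∀ a ∈ l, lam (-a) = fl (lam a)) :
    alt lam s (mp (fun x => -x) (sg l)) = alt lam (!s) (sg l) := by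
  simp only [alt, LinearMap.comp_apply, mp_sg, Srt_sg, List.map_map]
  have : l.map (lam ∘ fun x => -x) = (l.map lam).map fl := by
    rw [List.map_map]
    exact List.map_congr_left (fun a ha => hc a ha)
  rw [this, ← srt_fl, ph_fl]

lemma phi_sign (s : Bool) (l : List (Fin n × Bool)) (h : phi s l ≠ 0) (i : ℕ) (hi : i < l.length) :
    (l[i]).2 = (s ^^ decide (i % 2 = 1)) := by
  induction l generalizing s i with
  | nil => simp at hi
  | cons a l ih =>
    simp only [phi] at h
    split_ifs at h with h'
    · cases i with
      | zero => simpa using h'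
      | succ i =>
        simp only [List.getElem_cons_succ]
        rw [ih (!s) h i (by simpa using hi)]
        rcases Nat.mod_two_eq_zero_or_one i with h0 | h0
        · have : (i+1) % 2 = 1 := by omega
          simp [h0, this]
        · have : (i+1) % 2 = 0 := by omega
          simp [h0, this]
    · exact absurd rfl h

lemma sorted_full (l : List (Fin n × Bool)) (hs : Sorted l) (hl : l.length = n) (i : ℕ)
    (hi : i < l.length) : (l[i]).1.val = i := by
  have hm : StrictMono (fun j : Fin n => (l[j.val]'(by omega)).1) := by
    intro j k hjk
    exact List.pairwise_iff_getElem.1 hs _ _ _ _ hjk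
  have hsur := Finite.surjective_of_injective hm.injective
  have h2 : (fun j : Fin n => (l[j.val]'(by omega)).1) = id :=
    (StrictMono.range_inj hm strictMono_id).1 (by rw [hsur.range_eq]; simp)
  exact congrArg Fin.val (congrFun h2 ⟨i, by omega⟩)

lemma alt_extract (lam : X → Fin n × Bool) (s : Bool) (l : List X) (hl : l.length = n)
    (h : alt lam s (sg l) ≠ 0) (i : Fin n) :
    ∃ x ∈ l, lam x = (i, s ^^ decide (i.val % 2 = 1)) := by
  by_contra hcon
  apply h
  simp only [alt, LinearMap.comp_apply, mp_sg, Srt_sg]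
  refine sup_ext (ph s) 0 ?_ (srt_mem (l.map lam))
  rintro m ⟨h1, h2, h3⟩
  rw [ph_sg, LinearMap.zero_apply]
  by_contra hne
  have hlen : m.length = n := by simp [h3, hl]
  have hi : i.val < m.length := by omega
  have a1 := phi_sign s m hne i hi
  have a2 := sorted_full m h1 hlen i hi
  have a3 := h2 _ (List.getElem_mem hi)
  rw [List.mem_map] at a3
  obtain ⟨x, hx, hx'⟩ := a3
  refine hcon ⟨x, hx, ?_⟩
  rw [hx']
  exact Prod.ext (Fin.ext a2) a1

/-! geometry -/

variable {d : ℕ}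

def Good (k : ℕ) (ε : ℝ) (l : List (EuclideanSpace ℝ (Fin (d + 1)))) : Prop :=
  l.length = k + 1 ∧ (∀ x ∈ l, ‖x‖ = 1 ∧ ∀ i : Fin (d + 1), k < i.val → x i = 0) ∧
    ∀ x ∈ l, ∀ y ∈ l, dist x y < ε

def rot {E : Type*} [AddCommGroup E] [Module ℝ E] (e : E) (t : ℝ) (x : E) : E :=
  Real.cos t • x + Real.sin t • e

lemma rot_dist {E : Type*} [NormedAddCommGroup E] [NormedSpace ℝ E] (e x y : E) (he : ‖e‖ = 1)
    (hx : ‖x‖ = 1) (s t : ℝ) : dist (rot e s x) (rot e t y) ≤ dist x y + 2 * |s - t| := by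
  have h1 : rot e s x - rot e t y = (Real.cos s - Real.cos t) • x + Real.cos t • (x - y)
      + (Real.sin s - Real.sin t) • e := by
    simp only [rot]; module
  rw [dist_eq_norm, h1, dist_eq_norm]
  have hc : |Real.cos s - Real.cos t| ≤ |s - t| := by
    have := Real.abs_cos_sub_cos_le s t
    simpa using this
  have hs : |Real.sin s - Real.sin t| ≤ |s - t| := by
    have := Real.abs_sin_sub_sin_le s t
    simpa using this
  calc _ ≤ ‖(Real.cos s - Real.cos t) • x‖ + ‖Real.cos t • (x - y)‖
      + ‖(Real.sin s - Real.sin t) • e‖ := norm_add₃_le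
    _ = |Real.cos s - Real.cos t| + |Real.cos t| * ‖x - y‖ + |Real.sin s - Real.sin t| := by
      simp [norm_smul, he, hx]
    _ ≤ |s - t| + 1 * ‖x - y‖ + |s - t| := by
      gcongr
      exact Real.abs_cos_le_one t
    _ = _ := by ring

lemma rot_norm {E : Type*} [NormedAddCommGroup E] [InnerProductSpace ℝ E] (e x : E) (he : ‖e‖ = 1)
    (hx : ‖x‖ = 1) (hxe : inner ℝ x e = 0) (t : ℝ) : ‖rot e t x‖ = 1 := by
  have : ‖rot e t x‖ ^ 2 = 1 := by
    rw [rot, norm_add_sq_real, inner_smul_left, inner_smul_right, hxe, norm_smul, norm_smul, he, hx]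
    simp
  exact (sq_eq_sq₀ (norm_nonneg _) zero_le_one).1 (by simpa using this)

theorem chain_exists (k : ℕ) (hk : k ≤ d) : ∀ ε : ℝ, 0 < ε →
    ∃ c : Ch (EuclideanSpace ℝ (Fin (d + 1))), c ∈ Sup (Good k ε) ∧
      bd (c + mp (fun x => -x) c) = 0 ∧
      ∀ lam : EuclideanSpace ℝ (Fin (d + 1)) → Fin (d + 1) × Bool,
        (∀ x, ‖x‖ = 1 → lam (-x) = fl (lam x)) →
        (∀ x y, ‖x‖ = 1 → ‖y‖ = 1 → dist x y < ε → (lam x).1 = (lam y).1 → lam x = lam y) →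
        alt lam true c + alt lam false c = 1 := by
  induction k with
  | zero =>
    intro ε hε
    refine ⟨sg [EuclideanSpace.single 0 1], sg_mem ⟨by simp, ?_, by simpa using hε⟩, ?_, ?_⟩
    · intro x hx
      simp only [List.mem_singleton] at hx
      subst hx
      refine ⟨by simp, ?_⟩
      intro i hi
      have : i ≠ 0 := by rintro rfl; simp at hi
      simp [this]
    · simp [bdL, two]
    · intro lam _ _
      simp only [alt, LinearMap.comp_apply, mp_sg, Srt_sg, List.map_cons, List.map_nil, srt, ins_sg,
        insL, ph_sg, phi]
      cases (lam (EuclideanSpace.single 0 1)).2 <;> simp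
  | succ k ih =>
    intro ε hε
    obtain ⟨c, hc, hbc, hlam⟩ := ih (by omega) (ε / 2) (by positivity)
    set z := c + mp (fun x => -x) c with hz
    have hzG : z ∈ Sup (Good k (ε / 2)) := by
      refine Submodule.add_mem _ hc (sup_map _ _ ?_ hc)
      rintro l ⟨h1, h2, h3⟩
      rw [mp_sg]
      refine sg_mem ⟨by simp [h1], ?_, ?_⟩
      · intro x hx
        rw [List.mem_map] at hx
        obtain ⟨x, hx, rfl⟩ := hx
        refine ⟨by simp [(h2 x hx).1], fun i hi => by simp [(h2 x hx).2 i hi]⟩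
      · intro x hx y hy
        rw [List.mem_map] at hx hy
        obtain ⟨x, hx, rfl⟩ := hx
        obtain ⟨y, hy, rfl⟩ := hy
        simpa using h3 x hx y hy
    set e : EuclideanSpace ℝ (Fin (d + 1)) := EuclideanSpace.single ⟨k + 1, by omega⟩ 1 with he
    have hen : ‖e‖ = 1 := by simp [he]
    obtain ⟨N, hN⟩ := exists_nat_gt (2 * Real.pi / ε)
    have hN0 : (0 : ℝ) < N := lt_trans (by positivity) hN
    set τ : ℝ := Real.pi / (2 * N) with hτ
    have hτ0 : 0 ≤ τ := by positivity
    have hτε : 2 * τ < ε / 2 := by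
      rw [div_lt_iff₀ hε] at hN
      have : τ * (2 * N) = Real.pi := by rw [hτ]; field_simp
      by_contra hcon
      push Not at hcon
      nlinarith
    set P : ℕ → Ch (EuclideanSpace ℝ (Fin (d + 1))) :=
      fun M => ∑ j ∈ Finset.range M, pr (rot e (j * τ)) (rot e ((j + 1 : ℕ) * τ)) z with hP
    have hbP : ∀ M, bd (P M) = mp (rot e (M * τ)) z + z := by
      intro M
      induction M with
      | zero =>
        have : rot e (((0 : ℕ) : ℝ) * τ) = fun x => x := by ext x; simp [rot]
        simp only [hP, Finset.range_zero, Finset.sum_empty, map_zero, this, mp_id, two]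
      | succ M ihM =>
        have : P (M + 1) = P M + pr (rot e (M * τ)) (rot e ((M + 1 : ℕ) * τ)) z := by
          simp only [hP, Finset.sum_range_succ]
        rw [this, map_add, ihM, bd_pr, hbc, map_zero, add_zero]
        have := two (mp (rot e (M * τ)) z)
        calc _ = mp (rot e ((M + 1 : ℕ) * τ)) z + z + (mp (rot e (M * τ)) z + mp (rot e (M * τ)) z) := by
              abel
          _ = _ := by rw [this, add_zero]
    have hbN : bd (P N) = z := by
      rw [hbP]
      have h1 : (N : ℝ) * τ = Real.pi / 2 := by rw [hτ]; field_simp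
      have h2 : rot e ((N : ℝ) * τ) = fun _ => e := by ext x; simp [h1, rot]
      have h3 : mp (rot e ((N : ℝ) * τ)) z = 0 := by
        rw [hz, map_add, mp_mp, h2]
        exact two _
      rw [h3, zero_add]
    have hPG : P N ∈ Sup (Good (k + 1) ε) := by
      refine Submodule.sum_mem _ ?_
      intro j _
      refine sup_map _ _ ?_ hzG
      rintro l ⟨h1, h2, h3⟩
      rw [pr_sg]
      refine sup_mono ?_ (prL_mem _ _ l)
      rintro m ⟨m1, m2⟩
      have m3 : ∀ x ∈ m, ∃ v ∈ l, ∃ t : ℝ, j * τ ≤ t ∧ t ≤ j * τ + τ ∧ x = rot e t v := by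
        intro x hx
        obtain ⟨v, hv, h | h⟩ := m2 x hx
        · exact ⟨v, hv, _, le_rfl, by linarith, h⟩
        · exact ⟨v, hv, _, by push_cast; linarith, by push_cast; linarith, h⟩
      refine ⟨by omega, ?_, ?_⟩
      · intro x hx
        obtain ⟨v, hv, t, _, _, rfl⟩ := m3 x hx
        refine ⟨rot_norm e v hen (h2 v hv).1 ?_ t, ?_⟩
        · rw [he, EuclideanSpace.inner_single_right]
          simp [(h2 v hv).2 ⟨k + 1, by omega⟩ (by simp)]
        · intro i hi
          have : i ≠ ⟨k + 1, by omega⟩ := by intro h; rw [h] at hi; simp at hi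
          simp [rot, (h2 v hv).2 i (by omega), he, this]
      · intro x hx y hy
        obtain ⟨v, hv, t, t1, t2, rfl⟩ := m3 x hx
        obtain ⟨w, hw, s, s1, s2, rfl⟩ := m3 y hy
        have := rot_dist e v w hen (h2 v hv).1 t s
        have h4 := h3 v hv w hw
        have h5 : |t - s| ≤ τ := abs_le.2 ⟨by linarith, by linarith⟩
        linarith
    refine ⟨P N, hPG, ?_, ?_⟩
    · rw [map_add, ← mp_bd, hbN, hz, map_add, mp_mp]
      have : ((fun x : EuclideanSpace ℝ (Fin (d + 1)) => -x) ∘ fun x => -x) = fun x => x := by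
        ext x; simp
      rw [this, mp_id, add_comm (mp _ c) c, two]
    · intro lam hl1 hl2
      have key : alt lam true (bd (P N)) = alt lam true (P N) + alt lam false (P N) := by
        refine sup_ext (alt lam true ∘ₗ bd) (alt lam true + alt lam false) ?_ hPG
        rintro l ⟨h1, h2, h3⟩
        exact alt_bd lam true l (fun a ha b hb => hl2 a b (h2 a ha).1 (h2 b hb).1 (h3 a ha b hb))
      rw [← key, hbN, hz, map_add]
      have key2 : alt lam true (mp (fun x => -x) c) = alt lam false c := by
        refine sup_ext (alt lam true ∘ₗ mp (fun x => -x)) (alt lam false) ?_ hc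
        rintro l ⟨h1, h2, h3⟩
        exact alt_neg lam true l (fun a ha => hl1 a (h2 a ha).1)
      rw [key2]
      exact hlam lam hl1 (fun x y hx hy hxy => hl2 x y hx hy (by linarith))

/-- Fan's lemma, metric form -/
theorem fan_metric (ε : ℝ) (hε : 0 < ε)
    (lam : EuclideanSpace ℝ (Fin (d + 1)) → Fin (d + 1) × Bool)
    (h1 : ∀ x, ‖x‖ = 1 → lam (-x) = fl (lam x))
    (h2 : ∀ x y, ‖x‖ = 1 → ‖y‖ = 1 → dist x y < ε → (lam x).1 = (lam y).1 → lam x = lam y) :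
    ∃ v : Fin (d + 1) → EuclideanSpace ℝ (Fin (d + 1)), (∀ i, ‖v i‖ = 1) ∧
      (∀ i j, dist (v i) (v j) < ε) ∧ ∀ i, lam (v i) = (i, decide (i.val % 2 = 1)) := by
  obtain ⟨c, hc, -, h⟩ := chain_exists d le_rfl ε hε
  have h := h lam h1 h2
  by_contra hcon
  have hz : ∀ s, alt lam s c = 0 := by
    intro s
    refine sup_ext (alt lam s) 0 ?_ hc
    rintro l ⟨l1, l2, l3⟩
    by_contra hne
    have hx := alt_extract lam s l l1 hne
    choose v hv hv' using hx
    apply hcon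
    cases s with
    | false => exact ⟨v, fun i => (l2 _ (hv i)).1, fun i j => l3 _ (hv i) _ (hv j), fun i => by simp [hv' i]⟩
    | true =>
      refine ⟨fun i => - v i, fun i => by simp [(l2 _ (hv i)).1], fun i j => by simpa using l3 _ (hv i) _ (hv j), fun i => ?_⟩
      rw [h1 _ (l2 _ (hv i)).1, hv' i]
      simp [fl]
  rw [hz, hz] at h
  simp at h

lemma sep {E : Type*} [NormedAddCommGroup E] [ProperSpace E] (A : Set E) (hA : IsClosed A)
    (hb : A ⊆ Metric.sphere 0 1) (hd : A ∩ -A = ∅) :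
    ∃ δ > 0, ∀ x ∈ A, ∀ y ∈ -A, δ ≤ dist x y := by
  have hc : IsCompact A := (isCompact_sphere (0 : E) 1).of_isClosed_subset hA hb
  obtain ⟨δ, hδ, h⟩ := (Set.disjoint_iff_inter_eq_empty.2 hd).exists_thickenings hc hA.neg
  refine ⟨δ, hδ, fun x hx y hy => ?_⟩
  by_contra hlt
  push Not at hlt
  refine Set.disjoint_left.1 h (?_ : y ∈ _) (Metric.self_subset_thickening hδ _ hy)
  rw [Metric.mem_thickening_iff]
  exact ⟨x, hx, by rwa [dist_comm]⟩

theorem main (A : Fin (d + 1) → Set (EuclideanSpace ℝ (Fin (d + 1))))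
    (hclosed : ∀ i, IsClosed (A i))
    (hsub : ∀ i, A i ⊆ Metric.sphere (0 : EuclideanSpace ℝ (Fin (d + 1))) 1)
    (hdisj : ∀ i, A i ∩ (-A i) = ∅)
    (hcover : Metric.sphere (0 : EuclideanSpace ℝ (Fin (d + 1))) 1 ⊆ ⋃ i, (A i ∪ -A i)) :
    ∃ x, ∀ i : Fin (d + 1), x ∈ if i.val % 2 = 1 then A i else -A i := by
  classical
  have hcov : ∀ x : EuclideanSpace ℝ (Fin (d + 1)), ‖x‖ = 1 → ∃ i, x ∈ A i ∨ -x ∈ A i := by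
    intro x hx
    have := hcover (by simpa using hx : x ∈ Metric.sphere (0 : EuclideanSpace ℝ (Fin (d + 1))) 1)
    simpa using this
  have hdis : ∀ i x, x ∈ A i → -x ∈ A i → False := by
    intro i x h1 h2
    have : x ∈ A i ∩ -A i := ⟨h1, by simpa using h2⟩
    rw [hdisj] at this
    exact this
  have hidx : ∃ idx : EuclideanSpace ℝ (Fin (d + 1)) → Fin (d + 1),
      (∀ x, idx (-x) = idx x) ∧ ∀ x, ‖x‖ = 1 → x ∈ A (idx x) ∨ -x ∈ A (idx x) := by
    refine ⟨fun x => if h : ∃ i, x ∈ A i ∨ -x ∈ A i then Fin.find _ h else 0, ?_, ?_⟩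
    · intro x
      simp only [neg_neg, or_comm]
    · intro x hx
      simp only [hcov x hx, dif_pos]
      exact Fin.find_spec (hcov x hx)
  obtain ⟨idx, hi1, hi2⟩ := hidx
  set lam : EuclideanSpace ℝ (Fin (d + 1)) → Fin (d + 1) × Bool :=
    fun x => (idx x, decide (x ∈ A (idx x))) with hlam
  have hl1 : ∀ x, ‖x‖ = 1 → lam (-x) = fl (lam x) := by
    intro x hx
    simp only [hlam, fl, hi1]
    congr 1
    rcases hi2 x hx with h | h
    · have : -x ∉ A (idx x) := fun h' => hdis _ _ h h'
      simp [h, this]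
    · have : x ∉ A (idx x) := fun h' => hdis _ _ h' h
      simp [h, this]
  choose δ hδ hδ' using fun i => sep (A i) (hclosed i) (hsub i) (hdisj i)
  obtain ⟨i0, hi0⟩ := Finite.exists_min δ
  set C : Fin (d + 1) → Set (EuclideanSpace ℝ (Fin (d + 1))) :=
    fun i => if i.val % 2 = 1 then A i else -A i with hC
  have hCc : ∀ i, IsClosed (C i) := by
    intro i
    simp only [hC]
    split_ifs
    · exact hclosed i
    · exact (hclosed i).neg
  have happ : ∀ ε > 0, ∃ v : Fin (d + 1) → EuclideanSpace ℝ (Fin (d + 1)), (∀ i, ‖v i‖ = 1) ∧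
      (∀ i j, dist (v i) (v j) < ε) ∧ ∀ i, v i ∈ C i := by
    intro ε hε
    obtain ⟨v, v1, v2, v3⟩ := fan_metric (min ε (δ i0)) (lt_min hε (hδ i0)) lam hl1 (by
      intro x y hx hy hxy hxy'
      have hxy2 : idx x = idx y := hxy'
      have hlt : dist x y < δ (idx y) := lt_of_lt_of_le hxy ((min_le_right _ _).trans (hi0 _))
      refine Prod.ext hxy' ?_
      simp only [hlam, hxy2, decide_eq_decide]
      have ox := hi2 x hx
      have oy := hi2 y hy
      rw [hxy2] at ox
      constructor
      · intro h
        by_contra h'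
        exact absurd hlt (not_lt.2 (hδ' _ x h y (by simpa [h'] using oy)))
      · intro h
        by_contra h'
        rw [dist_comm] at hlt
        exact absurd hlt (not_lt.2 (hδ' _ y h x (by simpa [h'] using ox))))
    refine ⟨v, v1, fun i j => lt_of_lt_of_le (v2 i j) (min_le_left _ _), fun i => ?_⟩
    have h3 := v3 i
    simp only [hlam, Prod.mk.injEq] at h3
    obtain ⟨e1, e2⟩ := h3
    have o := hi2 (v i) (v1 i)
    rw [e1] at e2 o
    rw [decide_eq_decide] at e2
    simp only [hC]
    split_ifs with hp
    · exact e2.2 hp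
    · have : v i ∉ A i := fun h => hp (e2.1 h)
      simpa [this] using o
  have hne : ∀ i, (C i).Nonempty := by
    intro i
    obtain ⟨v, -, -, hv⟩ := happ 1 one_pos
    exact ⟨_, hv i⟩
  obtain ⟨v0, hv0, -⟩ := happ 1 one_pos
  obtain ⟨x, hx, hmin⟩ := (isCompact_sphere (0 : EuclideanSpace ℝ (Fin (d + 1))) 1).exists_isMinOn
    ⟨v0 0, by simp [hv0]⟩
    (f := fun x => ∑ i, Metric.infDist x (C i))
    (by
      refine Continuous.continuousOn (continuous_finsetSum _ fun i _ => Metric.continuous_infDist_pt _))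
  have hle : ∑ i, Metric.infDist x (C i) ≤ 0 := by
    refine le_of_forall_pos_le_add fun ε hε => ?_
    obtain ⟨v, v1, v2, v3⟩ := happ (ε / (d + 1)) (by positivity)
    have h1 := hmin (by simp [v1] : v 0 ∈ Metric.sphere (0 : EuclideanSpace ℝ (Fin (d + 1))) 1)
    simp only [Set.mem_ofPred_eq] at h1
    refine h1.trans ?_
    calc _ ≤ ∑ i : Fin (d + 1), ε / (d + 1) := Finset.sum_le_sum fun i _ =>
          (Metric.infDist_le_dist_of_mem (v3 i)).trans (v2 0 i).le
      _ = 0 + ε := by simp; field_simp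
  refine ⟨x, fun i => ?_⟩
  have h0 : Metric.infDist x (C i) = 0 := by
    have h2 := Finset.single_le_sum (f := fun i => Metric.infDist x (C i)) (s := Finset.univ)
      (fun i _ => Metric.infDist_nonneg) (Finset.mem_univ i)
    exact le_antisymm (h2.trans hle) Metric.infDist_nonneg
  exact ((hCc i).mem_iff_infDist_zero (hne i)).2 h0

end
end Fan



/-- For closed sets `A₁,…,A_{d+1} ⊆ S^d` with `A_i ∩ (-A_i) = ∅` that together with their
antipodes cover `S^d`, every prescribed sign pattern yields a nonempty intersection:
for every partition `S ⊔ Sᶜ` of `[d+1]`, `⋂_{i∈S} A_i ∩ ⋂_{i∈Sᶜ} (-A_i) ≠ ∅`. -/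
theorem stmt4 (d : ℕ)
    (A : Fin (d + 1) → Set (EuclideanSpace ℝ (Fin (d + 1))))
    (hclosed : ∀ i, IsClosed (A i))
    (hsub : ∀ i, A i ⊆ Metric.sphere (0 : EuclideanSpace ℝ (Fin (d + 1))) 1)
    (hdisj : ∀ i, A i ∩ (-A i) = ∅)
    (hcover : Metric.sphere (0 : EuclideanSpace ℝ (Fin (d + 1))) 1 ⊆ ⋃ i, (A i ∪ -A i)) :
    ∀ S : Finset (Fin (d + 1)),
      ((⋂ i ∈ S, A i) ∩ ⋂ i ∈ Sᶜ, -A i).Nonempty := by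
  classical
  intro S
  set B : Fin (d + 1) → Set (EuclideanSpace ℝ (Fin (d + 1))) :=
    fun i => if (i ∈ S ↔ i.val % 2 = 1) then A i else -A i with hB
  have hs : ∀ i, -A i ⊆ Metric.sphere (0 : EuclideanSpace ℝ (Fin (d + 1))) 1 := by
    intro i x hx
    have := hsub i (by simpa using hx : -x ∈ A i)
    simpa using this
  obtain ⟨x, hx⟩ := Fan.main B
    (by intro i; simp only [hB]; split_ifs; exacts [hclosed i, (hclosed i).neg])
    (by intro i; simp only [hB]; split_ifs; exacts [hsub i, hs i])
    (by
      intro i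
      simp only [hB]
      split_ifs
      · exact hdisj i
      · rw [neg_neg, Set.inter_comm]; exact hdisj i)
    (by
      refine hcover.trans (Set.iUnion_mono fun i => ?_)
      simp only [hB]
      split_ifs
      · exact subset_rfl
      · rw [neg_neg, Set.union_comm])
  refine ⟨x, ?_, ?_⟩
  · simp only [Set.mem_iInter]
    intro i hi
    have := hx i
    simp only [hB, hi, true_iff] at this
    split_ifs at this <;> simpa using this
  · simp only [Set.mem_iInter, Finset.mem_compl]
    intro i hi
    have := hx i
    simp only [hB, hi, false_iff] at this
    split_ifs at this <;> simpa using this
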